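/- Let K be a number field, V a finite-dimensional K-vector space equipped, for each finite place w of K, with a non-Archimedean K_w-norm ‖·‖_w on V ⊗_K K_w, and with a norm ‖·‖_∞ on the real vector space V ⊗_ℚ ℝ. Assume that Ĥ⁰_f(V̄(μ[v])) is a finitely generated ℤ-module for every μ ≥ 0 and that the sets Ĥ⁰_s(V̄(μ[v])) := {s ∈ Ĥ⁰_f(V̄(μ[v])) : ‖s ⊗ 1‖_∞ ≤ 1} are finite. Let λ ≥ 0 be a real number and let v be a finite place of K lying over the rational prime p. Then, writing ℓ̂^s(·) := log #Ĥ⁰_s(·), one has 0 ≤ ℓ̂^s(V̄(λ[v])) − ℓ̂^s(V̄) ≤ (⌈λ/(−log|p|_v)⌉ · log p + 2) · dim_ℚ V. -/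

import Mathlib

open IsDedekindDomain NumberField
open scoped TensorProduct NNReal Classical

set_option synthInstance.maxHeartbeats 1000000
set_option maxHeartbeats 1000000

/-- The normalized absolute value at a finite place `v` of a number field `K`,
extended to the `v`-adic completion `K_v`: `|α|_v = (#(𝓞 K / 𝔭_v))^(-ord_v α)`. -/
noncomputable def vabs {K : Type*} [Field K] [NumberField K]
    (v : HeightOneSpectrum (𝓞 K)) (x : v.adicCompletion K) : ℝ :=
  WithZeroMulInt.toNNReal (e := (Nat.card (𝓞 K ⧸ v.asIdeal) : ℝ≥0))
    (by
      haveI : Fintype (𝓞 K ⧸ v.asIdeal) :=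
        @Fintype.ofFinite _ (Ideal.finiteQuotientOfFreeOfNeBot _ v.ne_bot)
      haveI : Finite (𝓞 K ⧸ v.asIdeal) := Finite.of_fintype _
      exact_mod_cast Nat.card_ne_zero.mpr ⟨⟨0⟩, this⟩)
    (Valued.v x)

noncomputable instance adicSMulCommClass {K : Type*} [Field K] [NumberField K]
    (v : HeightOneSpectrum (𝓞 K)) :
    SMulCommClass K (v.adicCompletion K) (v.adicCompletion K) := Algebra.to_smulCommClass

/-- The set `Ĥ⁰_s(V̄(μ[v]))`: elements whose norm at each finite place `w ≠ v` is `≤ 1`,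
whose rescaled norm `e^{-μ}‖·‖_v` at `v` is `≤ 1`, and whose norm at infinity is `≤ 1`. -/
def H0s {K V : Type*} [Field K] [NumberField K] [AddCommGroup V] [Module K V] [Module ℚ V]
    (N : (w : HeightOneSpectrum (𝓞 K)) → ((w.adicCompletion K) ⊗[K] V) → ℝ)
    (Ninf : (ℝ ⊗[ℚ] V) → ℝ) (v : HeightOneSpectrum (𝓞 K)) (mu : ℝ) : Set V :=
  {s : V | (∀ w : HeightOneSpectrum (𝓞 K),
      (if w = v then Real.exp (-mu) * N w ((1 : w.adicCompletion K) ⊗ₜ[K] s)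
        else N w ((1 : w.adicCompletion K) ⊗ₜ[K] s)) ≤ 1) ∧
    Ninf ((1 : ℝ) ⊗ₜ[ℚ] s) ≤ 1}

/-- The set `Ĥ⁰_f(V̄(μ[v]))`. -/
def H0f {K V : Type*} [Field K] [NumberField K] [AddCommGroup V] [Module K V]
    (N : (w : HeightOneSpectrum (𝓞 K)) → ((w.adicCompletion K) ⊗[K] V) → ℝ)
    (v : HeightOneSpectrum (𝓞 K)) (mu : ℝ) : Set V :=
  {s : V | ∀ w : HeightOneSpectrum (𝓞 K),
      (if w = v then Real.exp (-mu) * N w ((1 : w.adicCompletion K) ⊗ₜ[K] s)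
        else N w ((1 : w.adicCompletion K) ⊗ₜ[K] s)) ≤ 1}

theorem count_aux {V : Type*} [AddCommGroup V] [Module ℚ V] [FiniteDimensional ℚ V]
    (M : Submodule ℤ V) (hM : M.FG) (B B0 : Set V) (hB : B.Finite) (hB0 : B0.Finite)
    (hBM : B ⊆ M) (q k : ℕ) (hk : 0 < k)
    (h : ∀ x ∈ B, ∀ y ∈ B, ∀ m ∈ M, x - y = k • m → q • m ∈ B0) (hq : 0 < q) :
    Nat.card B ≤ Nat.card B0 * k ^ (Module.finrank ℚ V) := by
  classical
  have : Module.Finite ℤ M := Module.Finite.iff_fg.mpr hM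
  have : IsAddTorsionFree V := IsAddTorsionFree.of_module_rat V
  have : Module.Free ℤ M := inferInstance
  have : NeZero k := ⟨hk.ne'⟩
  let b := Module.finBasis ℤ M
  have hr : Module.finrank ℤ M ≤ Module.finrank ℚ V := by
    have h1 : LinearIndependent ℤ (fun i => (b i : V)) :=
      b.linearIndependent.map' M.subtype (Submodule.ker_subtype _)
    have h2 := (LinearIndependent.iff_fractionRing ℤ ℚ).1 h1
    simpa using h2.fintype_card_le_finrank
  let f : V → (Fin (Module.finrank ℤ M) → ZMod k) := fun x =>
    if hx : x ∈ M then fun i => ((b.repr ⟨x, hx⟩ i : ℤ) : ZMod k) else 0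
  have hf : ∀ x ∈ M, ∀ y ∈ M, f x = f y → ∃ m ∈ M, x - y = k • m := by
    intro x hx y hy hxy
    simp only [f, dif_pos hx, dif_pos hy] at hxy
    have : ∀ i, ∃ c : ℤ, b.repr ⟨x, hx⟩ i - b.repr ⟨y, hy⟩ i = k * c := by
      intro i
      have := congrFun hxy i
      have := (ZMod.intCast_eq_intCast_iff_dvd_sub _ _ _).1 this.symm
      exact this
    choose c hc using this
    refine ⟨(∑ i, c i • b i : M), Subtype.property _, ?_⟩
    have : (⟨x, hx⟩ - ⟨y, hy⟩ : M) = k • ∑ i, c i • b i := by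
      apply b.repr.injective
      ext i
      simp [hc, Finsupp.single_apply]
    simpa using congrArg Subtype.val this
  have hcard := Finset.card_le_mul_card_image (f := f) hB.toFinset (Nat.card B0) ?_
  · rw [Nat.card_coe_set_eq, Set.ncard_eq_toFinset_card _ hB]
    refine hcard.trans (Nat.mul_le_mul_left _ ?_)
    refine (Finset.card_le_univ _).trans ?_
    simp [ZMod.card]
    exact Nat.pow_le_pow_right hk hr
  · intro a ha
    obtain ⟨y, hy, rfl⟩ := Finset.mem_image.1 ha
    rw [hB.mem_toFinset] at hy
    rw [Nat.card_coe_set_eq, Set.ncard_eq_toFinset_card _ hB0]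
    have key : ∀ x ∈ ({x ∈ hB.toFinset | f x = f y} : Finset V), ∃ m : V, q • m ∈ B0 ∧ x - y = k • m := by
      intro x hx
      simp only [Finset.mem_filter, hB.mem_toFinset] at hx
      obtain ⟨m, hm, hxy⟩ := hf x (hBM hx.1) y (hBM hy) hx.2
      exact ⟨m, h x hx.1 y hy m hm hxy, hxy⟩
    choose! g hg using key
    refine Finset.card_le_card_of_injOn (fun x => q • g x) ?_ ?_
    · intro x hx
      simpa using (hg x hx).1
    · intro x hx x' hx' hxx
      have : g x = g x' := nsmul_right_injective hq.ne' hxx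
      have h1 := (hg x hx).2
      rw [this, ← (hg x' hx').2] at h1
      exact sub_left_injective h1

section aux
variable {K : Type*} [Field K] [NumberField K] (v : HeightOneSpectrum (𝓞 K))

theorem one_lt_card_aux : (1 : ℝ≥0) < (Nat.card (𝓞 K ⧸ v.asIdeal) : ℝ≥0) := by
  have : Finite (𝓞 K ⧸ v.asIdeal) := Ideal.finiteQuotientOfFreeOfNeBot _ v.ne_bot
  have : Nontrivial (𝓞 K ⧸ v.asIdeal) := Ideal.Quotient.nontrivial_iff.2 v.isPrime.ne_top
  exact_mod_cast Finite.one_lt_card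

theorem valued_natCast_aux (n : ℕ) :
    Valued.v ((n : ℕ) : v.adicCompletion K) = v.valuation K (algebraMap (𝓞 K) K (n : 𝓞 K)) := by
  have := v.valuedAdicCompletion_eq_valuation (K := K) (n : 𝓞 K)
  rw [← this]
  congr 1
  exact (map_natCast (algebraMap (𝓞 K) (v.adicCompletion K)) n).symm

theorem vabs_natCast_le_one (n : ℕ) : vabs v ((n : ℕ) : v.adicCompletion K) ≤ 1 := by
  unfold vabs
  have h := (WithZeroMulInt.toNNReal_le_one_iff (one_lt_card_aux v)).2
    ((valued_natCast_aux v n).le.trans (v.valuation_le_one (n : 𝓞 K)))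
  exact_mod_cast h

theorem vabs_natCast_lt_one (n : ℕ) (hn : (n : 𝓞 K) ∈ v.asIdeal) :
    vabs v ((n : ℕ) : v.adicCompletion K) < 1 := by
  unfold vabs
  have h := (WithZeroMulInt.toNNReal_lt_one_iff (one_lt_card_aux v)).2
    ((valued_natCast_aux v n).trans_lt ((v.valuation_lt_one_iff_mem (n : 𝓞 K)).2 hn))
  exact_mod_cast h

theorem vabs_natCast_pos (n : ℕ) (hn : n ≠ 0) :
    0 < vabs v ((n : ℕ) : v.adicCompletion K) := by
  unfold vabs
  have h0 : Valued.v ((n : ℕ) : v.adicCompletion K) ≠ 0 := by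
    rw [valued_natCast_aux]
    simp [hn]
  have h := WithZeroMulInt.toNNReal_pos (one_lt_card_aux v).ne_bot h0
  exact_mod_cast h

theorem vabs_pow (x : v.adicCompletion K) (n : ℕ) : vabs v (x ^ n) = vabs v x ^ n := by
  simp [vabs]
end aux

/-- Lemma 3.3: `0 ≤ ℓ̂^s(V̄(λ[v])) − ℓ̂^s(V̄) ≤ (⌈λ/(−log|p|_v)⌉·log p + 2)·dim_ℚ V`. -/
theorem stmt2 {K V : Type*} [Field K] [NumberField K]
    [AddCommGroup V] [Module K V] [FiniteDimensional K V]
    [Module ℚ V] [IsScalarTower ℚ K V]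
    (N : (w : HeightOneSpectrum (𝓞 K)) → ((w.adicCompletion K) ⊗[K] V) → ℝ)
    (hN0 : ∀ w x, 0 ≤ N w x)
    (hNeq : ∀ w x, N w x = 0 ↔ x = 0)
    (hNmax : ∀ w x y, N w (x + y) ≤ max (N w x) (N w y))
    (hNsmul : ∀ (w : HeightOneSpectrum (𝓞 K)) (a : w.adicCompletion K)
      (x : (w.adicCompletion K) ⊗[K] V), N w (a • x) = vabs w a * N w x)
    (Ninf : (ℝ ⊗[ℚ] V) → ℝ)
    (hNinf0 : ∀ x, 0 ≤ Ninf x)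
    (hNinfeq : ∀ x, Ninf x = 0 ↔ x = 0)
    (hNinfadd : ∀ x y, Ninf (x + y) ≤ Ninf x + Ninf y)
    (hNinfsmul : ∀ (c : ℝ) (x : ℝ ⊗[ℚ] V), Ninf (c • x) = |c| * Ninf x)
    (lam : ℝ) (hlam : 0 ≤ lam)
    (p : ℕ) (hp : p.Prime)
    (v : HeightOneSpectrum (𝓞 K)) (hv : (p : 𝓞 K) ∈ v.asIdeal)
    (hFG : ∀ mu : ℝ, 0 ≤ mu → ∃ M : Submodule ℤ V, (M : Set V) = H0f N v mu ∧ M.FG)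
    (hfin : ∀ mu : ℝ, 0 ≤ mu → (H0s N Ninf v mu).Finite) :
    0 ≤ Real.log (Nat.card (H0s N Ninf v lam)) -
        Real.log (Nat.card {s : V |
          (∀ w : HeightOneSpectrum (𝓞 K),
            N w ((1 : w.adicCompletion K) ⊗ₜ[K] s) ≤ 1) ∧ Ninf ((1 : ℝ) ⊗ₜ[ℚ] s) ≤ 1}) ∧
      Real.log (Nat.card (H0s N Ninf v lam)) -
        Real.log (Nat.card {s : V |
          (∀ w : HeightOneSpectrum (𝓞 K),
            N w ((1 : w.adicCompletion K) ⊗ₜ[K] s) ≤ 1) ∧ Ninf ((1 : ℝ) ⊗ₜ[ℚ] s) ≤ 1}) ≤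
        ((⌈lam / (-Real.log (vabs v ((p : ℕ) : v.adicCompletion K)))⌉ : ℝ) * Real.log p + 2) *
          (Module.finrank ℚ V : ℝ) := by
  have hset : {s : V | (∀ w : HeightOneSpectrum (𝓞 K),
      N w ((1 : w.adicCompletion K) ⊗ₜ[K] s) ≤ 1) ∧ Ninf ((1 : ℝ) ⊗ₜ[ℚ] s) ≤ 1}
      = H0s N Ninf v 0 := by
    simp [H0s]
  rw [hset]
  have hNn : ∀ (w : HeightOneSpectrum (𝓞 K)) (n : ℕ) (s : V),
      N w ((1 : w.adicCompletion K) ⊗ₜ[K] (n • s))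
        = vabs w ((n : ℕ) : w.adicCompletion K) * N w ((1 : w.adicCompletion K) ⊗ₜ[K] s) := by
    intro w n s
    rw [← hNsmul, TensorProduct.tmul_smul, Nat.cast_smul_eq_nsmul]
  have hIn : ∀ (n : ℕ) (s : V), Ninf ((1 : ℝ) ⊗ₜ[ℚ] (n • s)) = n * Ninf ((1 : ℝ) ⊗ₜ[ℚ] s) := by
    intro n s
    rw [TensorProduct.tmul_smul, ← Nat.cast_smul_eq_nsmul ℝ, hNinfsmul, Nat.abs_cast]
  have hIsub : ∀ x y : V, Ninf ((1 : ℝ) ⊗ₜ[ℚ] (x - y))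
      ≤ Ninf ((1 : ℝ) ⊗ₜ[ℚ] x) + Ninf ((1 : ℝ) ⊗ₜ[ℚ] y) := by
    intro x y
    rw [sub_eq_add_neg, TensorProduct.tmul_add]
    refine (hNinfadd _ _).trans ?_
    have := hNinfsmul (-1) ((1 : ℝ) ⊗ₜ[ℚ] y)
    rw [neg_one_smul] at this
    rw [TensorProduct.tmul_neg, this]
    simp
  have hfinQ : FiniteDimensional ℚ V := Module.Finite.trans K V
  have hsub : H0s N Ninf v 0 ⊆ H0s N Ninf v lam := by
    rintro s ⟨h1, h2⟩
    refine ⟨fun w => ?_, h2⟩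
    have := h1 w
    split_ifs at this ⊢ with hw
    · refine le_trans (mul_le_mul_of_nonneg_right ?_ (hN0 _ _)) this
      exact Real.exp_le_exp.2 (by linarith)
    · exact this
  have hmono : Nat.card (H0s N Ninf v 0) ≤ Nat.card (H0s N Ninf v lam) := by
    have := Set.ncard_le_ncard hsub (hfin lam hlam)
    simpa only [Nat.card_coe_set_eq] using this
  have hpos : 0 < Nat.card (H0s N Ninf v 0) := by
    rw [Nat.card_coe_set_eq, Set.ncard_pos (hfin 0 le_rfl)]
    refine ⟨0, fun w => ?_, ?_⟩
    · have h0 : N w ((1 : w.adicCompletion K) ⊗ₜ[K] (0 : V)) = 0 := by simp [hNeq]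
      simp only [h0]
      simp
    · have h0 : Ninf ((1 : ℝ) ⊗ₜ[ℚ] (0 : V)) = 0 := by simp [hNinfeq]
      rw [h0]; exact zero_le_one
  have hposR : (0 : ℝ) < Nat.card (H0s N Ninf v 0) := by exact_mod_cast hpos
  have hposL : (0 : ℝ) < Nat.card (H0s N Ninf v lam) := by exact_mod_cast hpos.trans_le hmono
  constructor
  · rw [sub_nonneg]
    exact Real.log_le_log hposR (by exact_mod_cast hmono)
  have hp0 := vabs_natCast_pos v p hp.ne_zero
  have hlog : 0 < -Real.log (vabs v ((p : ℕ) : v.adicCompletion K)) := by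
    have := Real.log_neg hp0 (vabs_natCast_lt_one v p hv)
    linarith
  obtain ⟨n, hn⟩ := Int.eq_ofNat_of_zero_le
    (Int.ceil_nonneg (div_nonneg hlam hlog.le))
  have hle : lam ≤ n * -Real.log (vabs v ((p : ℕ) : v.adicCompletion K)) := by
    have := Int.le_ceil (lam / (-Real.log (vabs v ((p : ℕ) : v.adicCompletion K))))
    rw [hn, div_le_iff₀ hlog] at this
    exact_mod_cast this
  rw [hn]
  have hpn : vabs v ((p ^ n : ℕ) : v.adicCompletion K) ≤ Real.exp (-lam) := by
    rw [Nat.cast_pow, vabs_pow, ← Real.exp_log hp0, ← Real.exp_nat_mul, Real.exp_le_exp]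
    linarith
  obtain ⟨M, hMeq, hMfg⟩ := hFG lam hlam
  have hcount := count_aux M hMfg (H0s N Ninf v lam) (H0s N Ninf v 0) (hfin lam hlam)
    (hfin 0 le_rfl) (by rw [hMeq]; exact fun s hs => hs.1) (p ^ n) (2 * p ^ n)
    (by have := hp.pos; positivity) ?_ (by have := hp.pos; positivity)
  · have hppos : (0 : ℝ) < p := by exact_mod_cast hp.pos
    have h1 : (Nat.card (H0s N Ninf v lam) : ℝ)
        ≤ Nat.card (H0s N Ninf v 0) * (2 * (p : ℝ) ^ n) ^ Module.finrank ℚ V := by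
      exact_mod_cast hcount
    have h2 := Real.log_le_log hposL h1
    rw [Real.log_mul hposR.ne' (by positivity), Real.log_pow,
      Real.log_mul (by norm_num) (by positivity), Real.log_pow] at h2
    have h3 : Real.log 2 ≤ 2 := by have := Real.log_two_lt_d9; linarith
    have h4 : (0 : ℝ) ≤ Module.finrank ℚ V := Nat.cast_nonneg _
    push_cast
    nlinarith [mul_le_mul_of_nonneg_right h3 h4]
  · intro x hx y hy m hm hxy
    have hm' : m ∈ H0f N v lam := by rw [← hMeq]; exact hm
    refine ⟨fun w => ?_, ?_⟩
    · have := hm' w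
      rw [hNn]
      split_ifs at this ⊢ with hw
      · subst hw
        rw [neg_zero, Real.exp_zero, one_mul]
        exact (mul_le_mul_of_nonneg_right hpn (hN0 _ _)).trans this
      · exact (mul_le_of_le_one_left (hN0 _ _) (vabs_natCast_le_one w _)).trans this
    · have h1 := hIsub x y
      rw [hxy, mul_smul, hIn] at h1
      have := hx.2
      have := hy.2
      push_cast at h1
      linarith
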